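/- The toric ideal ker φ is not generated by n binomials: there is no set of n binomials of K[x₁,…,xₙ,y₁,…,yₙ] that generates ker φ as an ideal. In particular the simplicial toric variety V of codimension n attached to this parametrization is not a complete intersection. -/

import Mathlib

open MvPolynomial

/-- A binomial: the difference of two distinct monic monomials. -/
def IsBinomial {σ : Type*} {K : Type*} [CommRing K] (F : MvPolynomial σ K) : Prop :=
  ∃ a b : σ →₀ ℕ, a ≠ b ∧ F = monomial a (1 : K) - monomial b (1 : K)

/-!
Modulo a binomial ideal, two monomials agree exactly when their exponents are related by the
congruence that the binomials generate on the exponent monoid, so it suffices to bound the number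
of pairs generating the congruence "same toric degree".

For each `l`, some power of `y_l` has the degree of a monomial in the `x_i`. The divisors of a power
of `y_l` are again powers of `y_l`, hence some generating pair contains a pure power of `y_l`, and
for distinct `l` these pairs are distinct because the degrees of the `y_l` are pairwise
nonproportional. With at most `n` generators there are no others. In the `n - 1` generators attached
to `y_1, …, y_{n-1}` the variable `y_n` does not occur at all, so if the last generator is
`y_n ^ k - y_n ^ e * m`, with `m` free of `y_n`, then along every binomial of the ideal the exponent
of `y_n` changes by a multiple of `k - e`. The binomial
`y_1 ^ g ⋯ y_{n-1} ^ g * y_n - x_1 ⋯ x_n` thus forces `k - e = ±1`, and a comparison of degrees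
excludes both signs.
-/

open Finsupp (single weight NonTorsionWeight)

section PairCon

variable {M κ : Type*}

/-- The additive congruence generated by the pairs `(A i, B i)`; on exponent vectors it is the
combinatorial counterpart of the ideal generated by the binomials `X ^ A i - X ^ B i`. -/
def pairCon [Add M] (A B : κ → M) : AddCon M :=
  addConGen fun a b => ∃ i, A i = a ∧ B i = b

theorem pairCon_apply [Add M] (A B : κ → M) (i : κ) : pairCon A B (A i) (B i) :=
  AddConGen.Rel.of _ _ ⟨i, rfl, rfl⟩

theorem pairCon_le [Add M] {A B : κ → M} {c : AddCon M} :
    pairCon A B ≤ c ↔ ∀ i, c (A i) (B i) := by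
  refine ⟨fun h i => h (pairCon_apply A B i), fun h => AddCon.addConGen_le.2 ?_⟩
  rintro _ _ ⟨i, rfl, rfl⟩
  exact h i

theorem sub_mem_of_pairCon {G : Type*} [AddMonoid M] [AddCommGroup G] {A B : κ → M} (f : M →+ G)
    (S : AddSubgroup G) (hS : ∀ i, f (A i) - f (B i) ∈ S) {a b : M} (hab : pairCon A B a b) :
    f a - f b ∈ S := by
  let c : AddCon M := AddCon.ker ((QuotientAddGroup.mk' S).comp f)
  have hc (x y : M) : c x y ↔ f x - f y ∈ S := QuotientAddGroup.eq_iff_sub_mem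
  exact (hc a b).1 (pairCon_le.2 (fun i => (hc _ _).2 (hS i)) hab)

/-- The Rees congruence of the ideal `{a | ¬ a ≤ p}`: it collapses all elements that do not lie
below `p` and identifies no others. -/
def notLeCon [AddCommMonoid M] [PartialOrder M] [CanonicallyOrderedAdd M] (p : M) : AddCon M where
  r a b := a = b ∨ ¬ a ≤ p ∧ ¬ b ≤ p
  iseqv := ⟨fun _ => .inl rfl, by grind, by grind⟩
  add' := by
    have left {x : M} (y : M) (hx : ¬ x ≤ p) : ¬ x + y ≤ p := mt le_self_add.trans hx
    have right {x : M} (y : M) (hx : ¬ x ≤ p) : ¬ y + x ≤ p := mt le_add_self.trans hx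
    rintro a b a' b' (rfl | ⟨ha, hb⟩) (rfl | ⟨ha', hb'⟩)
    · exact .inl rfl
    · exact .inr ⟨right a ha', right a hb'⟩
    · exact .inr ⟨left a' ha, left a' hb⟩
    · exact .inr ⟨left a' ha, left b' hb⟩

theorem exists_le_of_pairCon [AddCommMonoid M] [PartialOrder M] [CanonicallyOrderedAdd M]
    {A B : κ → M} {p q : M} (h : pairCon A B p q) (hpq : p ≠ q) :
    ∃ i, A i ≠ B i ∧ (A i ≤ p ∨ B i ≤ p) := by
  by_contra! hAB
  have hle : pairCon A B ≤ notLeCon p := pairCon_le.2 fun i => or_iff_not_imp_left.2 (hAB i)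
  exact (hle h).elim hpq fun hnot => hnot.1 le_rfl

end PairCon

section Toric

variable {σ τ κ R : Type*}

theorem pairCon_of_sub_mem_span [CommRing R] [Nontrivial R] {A B : κ → σ →₀ ℕ} {a b : σ →₀ ℕ}
    (h : monomial a (1 : R) - monomial b 1 ∈
      Ideal.span (Set.range fun i => monomial (A i) (1 : R) - monomial (B i) 1)) :
    pairCon A B a b := by
  let c := pairCon A B
  let ψ : MvPolynomial σ R →+* AddMonoidAlgebra R c.Quotient :=
    AddMonoidAlgebra.mapDomainRingHom R c.mk'
  have hψ (a : σ →₀ ℕ) : ψ (monomial a 1) = AddMonoidAlgebra.single (a : c.Quotient) 1 :=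
    AddMonoidAlgebra.mapDomain_single
  have hker (a b : σ →₀ ℕ) : monomial a 1 - monomial b 1 ∈ RingHom.ker ψ ↔ c a b := by
    rw [RingHom.mem_ker, map_sub, sub_eq_zero, hψ, hψ, ← AddCon.eq]
    exact (AddMonoidAlgebra.single_left_injective one_ne_zero).eq_iff
  have hspan : Ideal.span (Set.range fun i => monomial (A i) (1 : R) - monomial (B i) 1) ≤
      RingHom.ker ψ := by
    rw [Ideal.span_le]
    rintro _ ⟨i, rfl⟩
    exact (hker _ _).2 (pairCon_apply A B i)
  exact (hker a b).1 (hspan h)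

theorem map_monomial_one_of_map_X [CommSemiring R] {w : σ → τ →₀ ℕ}
    {φ : MvPolynomial σ R →ₐ[R] MvPolynomial τ R} (hφ : ∀ s, φ (X s) = monomial (w s) 1)
    (a : σ →₀ ℕ) : φ (monomial a 1) = monomial (weight w a) 1 := by
  rw [MvPolynomial.aeval_unique φ, aeval_monomial]
  simp [hφ, monomial_pow, Finsupp.weight_apply, monomial_finsupp_sum_index]

theorem pairCon_eq_ker_weight [CommRing R] [Nontrivial R] {w : σ → τ →₀ ℕ}
    {φ : MvPolynomial σ R →ₐ[R] MvPolynomial τ R} (hφ : ∀ s, φ (X s) = monomial (w s) 1)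
    {A B : κ → σ →₀ ℕ}
    (hspan : Ideal.span (Set.range fun i => monomial (A i) (1 : R) - monomial (B i) 1) =
      RingHom.ker φ) :
    pairCon A B = AddCon.ker (weight (R := ℕ) w) := by
  have hker (a b : σ →₀ ℕ) :
      monomial a 1 - monomial b 1 ∈ RingHom.ker φ ↔ weight w a = weight w b := by
    rw [RingHom.mem_ker, map_sub, sub_eq_zero, map_monomial_one_of_map_X hφ,
      map_monomial_one_of_map_X hφ, monomial_left_inj one_ne_zero]
  refine le_antisymm (pairCon_le.2 fun i => ?_) fun a b hab => ?_
  · exact (hker _ _).1 (hspan ▸ Ideal.subset_span ⟨i, rfl⟩)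
  · exact pairCon_of_sub_mem_span (R := R) (hspan ▸ (hker a b).2 hab)

end Toric

section PurePower

variable {σ κ M : Type*} [AddCommMonoid M] {w : σ → M} {A B : κ → σ →₀ ℕ}

theorem weight_eq_of_pair_eq (h : pairCon A B = AddCon.ker (weight (R := ℕ) w)) {i : κ}
    {a b : σ →₀ ℕ} (hab : s(A i, B i) = s(a, b)) : weight w a = weight w b := by
  have hi : weight w (A i) = weight w (B i) := AddCon.ker_apply.1 (h ▸ pairCon_apply A B i)
  obtain ⟨rfl, rfl⟩ | ⟨rfl, rfl⟩ := Sym2.eq_iff.1 hab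
  exacts [hi, hi.symm]

variable [PartialOrder M] [CanonicallyOrderedAdd M] [IsOrderedAddMonoid M] [NonTorsionWeight ℕ w]

theorem exists_pair_eq_single (h : pairCon A B = AddCon.ker (weight (R := ℕ) w)) {s : σ} {m : ℕ}
    {b : σ →₀ ℕ} (hb : weight w (single s m) = weight w b) (hne : single s m ≠ b) :
    ∃ i, ∃ k > 0, ∃ u, s(A i, B i) = s(single s k, u) := by
  obtain ⟨i, hi, hle⟩ := exists_le_of_pairCon (h ▸ AddCon.ker_apply.2 hb : pairCon A B _ b) hne
  obtain ⟨a, u, hau, ha⟩ : ∃ a u, s(A i, B i) = s(a, u) ∧ a ≤ single s m :=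
    hle.elim (fun hA => ⟨A i, B i, rfl, hA⟩) fun hB => ⟨B i, A i, Sym2.eq_swap, hB⟩
  obtain ⟨k, rfl⟩ : ∃ k, a = single s k := Finsupp.support_subset_singleton'.1 <|
    (Finsupp.support_mono ha).trans Finsupp.support_single_subset
  refine ⟨i, k, Nat.pos_of_ne_zero ?_, u, hau⟩
  rintro rfl
  have hu : u = 0 := (Finsupp.weight_eq_zero_iff_eq_zero w).1 <| by
    simpa using (weight_eq_of_pair_eq h hau).symm
  have hzero : A i = 0 ∧ B i = 0 := by simpa [hu] using hau
  exact hi (hzero.1.trans hzero.2.symm)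

theorem exists_injective_pair_eq_single {ι : Type*}
    (h : pairCon A B = AddCon.ker (weight (R := ℕ) w)) (s : ι → σ)
    (hpow : ∀ l, ∃ (m : ℕ) (b : σ →₀ ℕ),
      weight w (single (s l) m) = weight w b ∧ single (s l) m ≠ b)
    (hprop : ∀ l l' k k', 0 < k → 0 < k' → k • w (s l) = k' • w (s l') → l = l') :
    ∃ j : ι → κ, j.Injective ∧
      ∃ (k : ι → ℕ) (u : ι → σ →₀ ℕ), ∀ l, s(A (j l), B (j l)) = s(single (s l) (k l), u l) := by
  have hpair (l : ι) : ∃ i, ∃ k > 0, ∃ u, s(A i, B i) = s(single (s l) k, u) := by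
    obtain ⟨m, b, hb, hne⟩ := hpow l
    exact exists_pair_eq_single h hb hne
  choose j k hk u hju using hpair
  refine ⟨j, fun l l' hll' => hprop l l' _ _ (hk l) (hk l') ?_, k, u, hju⟩
  have hsame : s(single (s l) (k l), u l) = s(single (s l') (k l'), u l') := by
    rw [← hju, ← hju, hll']
  rw [← Finsupp.weight_single, ← Finsupp.weight_single]
  obtain ⟨h₁, -⟩ | ⟨h₁, -⟩ := Sym2.eq_iff.1 hsame
  · rw [h₁]
  · rw [h₁, weight_eq_of_pair_eq h (hju l')]

end PurePower

section Simplicial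

variable {ι : Type*} [Fintype ι] [DecidableEq ι] (N : ι) (g d c : ℕ)

/-- The exponent vectors of the parametrization: `Sum.inl i` stands for `xᵢ`, `Sum.inr i` for `yᵢ`,
and `N` for the index `n`. To avoid truncated subtraction the parameters are `d = f - g` and
`c = (n - 1) g - (n - 2) f`, that is `c = g - (n - 2) d`. -/
noncomputable def toricWeight : ι ⊕ ι → ι →₀ ℕ
  | .inl i => single i ((g + d) * g)
  | .inr i => if i = N then ∑ p ∈ {N}ᶜ, single p (g ^ 2) + single N (g * c)
      else single i d + single N d

variable {N g d c}

theorem toricWeight_inr_of_ne {i : ι} (hi : i ≠ N) :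
    toricWeight N g d c (.inr i) = single i d + single N d :=
  if_neg hi

variable (N g d c) in
theorem toricWeight_inr_self :
    toricWeight N g d c (.inr N) = ∑ p ∈ {N}ᶜ, single p (g ^ 2) + single N (g * c) :=
  if_pos rfl

theorem toricWeight_inr_self_apply_of_ne {p : ι} (hp : p ≠ N) :
    toricWeight N g d c (.inr N) p = g ^ 2 := by
  simp [toricWeight_inr_self, Finsupp.single_apply, hp]

variable (N g d c) in
theorem toricWeight_inr_self_apply_self : toricWeight N g d c (.inr N) N = g * c := by
  simp [toricWeight_inr_self, Finsupp.single_apply]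

theorem weight_toricWeight (a : ι ⊕ ι →₀ ℕ) :
    weight (toricWeight N g d c) a =
      ∑ p, a (.inl p) • single p ((g + d) * g) +
        (a (.inr N) • toricWeight N g d c (.inr N) +
          ∑ p ∈ {N}ᶜ, a (.inr p) • (single p d + single N d)) := by
  have hrest (p : ι) (hp : p ∈ ({N}ᶜ : Finset ι)) :
      a (.inr p) • toricWeight N g d c (.inr p) = a (.inr p) • (single p d + single N d) := by
    rw [toricWeight_inr_of_ne (by simpa using hp)]
  rw [Finsupp.weight_eq_sum, Fintype.sum_sum_type, Fintype.sum_eq_add_sum_compl N fun p =>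
    a (.inr p) • toricWeight N g d c (.inr p), Finset.sum_congr rfl hrest]
  rfl

theorem weight_toricWeight_apply_of_ne (a : ι ⊕ ι →₀ ℕ) {p : ι} (hp : p ≠ N) :
    weight (toricWeight N g d c) a p =
      a (.inl p) * ((g + d) * g) + (a (.inr N) * g ^ 2 + a (.inr p) * d) := by
  simp [weight_toricWeight, toricWeight_inr_self_apply_of_ne hp, Finsupp.single_apply, hp]

theorem weight_toricWeight_apply_self (a : ι ⊕ ι →₀ ℕ) :
    weight (toricWeight N g d c) a N =
      a (.inl N) * ((g + d) * g) + (a (.inr N) * (g * c) + ∑ p ∈ {N}ᶜ, a (.inr p) * d) := by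
  have hrest (p : ι) (hp : p ∈ ({N}ᶜ : Finset ι)) :
      (a (.inr p) • (single p d + single N d)) N = a (.inr p) * d := by
    have hp : p ≠ N := by simpa using hp
    simp [hp]
  rw [weight_toricWeight, Finsupp.add_apply, Finsupp.add_apply, Finsupp.finsetSum_apply,
    Finsupp.finsetSum_apply, Finset.sum_congr rfl hrest]
  simp [toricWeight_inr_self_apply_self, Finsupp.single_apply]

theorem weight_toricWeight_mapDomain_inl (u : ι →₀ ℕ) :
    weight (toricWeight N g d c) (u.mapDomain Sum.inl) = ((g + d) * g) • u := by
  have hinl (p : ι) : u.mapDomain Sum.inl (.inl p : ι ⊕ ι) = u p :=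
    Finsupp.mapDomain_apply Sum.inl_injective u p
  have hinr (p : ι) : u.mapDomain Sum.inl (.inr p : ι ⊕ ι) = 0 :=
    Finsupp.mapDomain_of_notMem_range u _ (by simp)
  ext p
  simp [weight_toricWeight, hinl, hinr, Finsupp.single_apply, mul_comm]

theorem exists_weight_single_inr_eq (hg : 0 < g) (l : ι) : ∃ (m : ℕ) (b : ι ⊕ ι →₀ ℕ),
    weight (toricWeight N g d c) (single (.inr l) m) = weight (toricWeight N g d c) b ∧
      single (.inr l) m ≠ b := by
  refine ⟨(g + d) * g, (toricWeight N g d c (.inr l)).mapDomain Sum.inl, ?_, fun h => ?_⟩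
  · rw [Finsupp.weight_single, weight_toricWeight_mapDomain_inl]
  · have hl := DFunLike.congr_fun h (.inr l)
    rw [Finsupp.single_eq_same, Finsupp.mapDomain_of_notMem_range _ _ (by simp)] at hl
    have : 0 < (g + d) * g := by positivity
    omega

theorem nonTorsionWeight_toricWeight (hι : 2 ≤ Fintype.card ι) (hg : 0 < g) (hd : 0 < d) :
    NonTorsionWeight ℕ (toricWeight N g d c) := by
  refine Finsupp.nonTorsionWeight_of ℕ _ fun s => DFunLike.ne_iff.2 ?_
  obtain i | l := s
  · exact ⟨i, by simp [toricWeight, hg.ne']⟩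
  obtain rfl | hl := eq_or_ne l N
  · obtain ⟨p, hp⟩ := Fintype.exists_ne_of_one_lt_card hι l
    exact ⟨p, by simp [toricWeight_inr_self_apply_of_ne hp, hg.ne']⟩
  · exact ⟨l, by simp [toricWeight_inr_of_ne hl, hd.ne']⟩

theorem apply_inr_eq_zero_of_weight_eq (hι : 3 ≤ Fintype.card ι) (hg : 0 < g) {l : ι} (hl : l ≠ N)
    {k : ℕ} {a : ι ⊕ ι →₀ ℕ}
    (ha : weight (toricWeight N g d c) a = k • toricWeight N g d c (.inr l)) : a (.inr N) = 0 := by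
  obtain ⟨p, hpl, hpN⟩ := ENat.exists_ne_ne_of_three_le (by simpa using hι) l N
  have hp : a (.inl p) * ((g + d) * g) + (a (.inr N) * g ^ 2 + a (.inr p) * d) = 0 := by
    rw [← weight_toricWeight_apply_of_ne a hpN, ha, toricWeight_inr_of_ne hl]
    simp [hpl, hpN]
  have hN : a (.inr N) * g ^ 2 = 0 := by omega
  simpa [hg.ne'] using hN

theorem eq_of_smul_toricWeight_inr_eq (hι : 3 ≤ Fintype.card ι) (hg : 0 < g) (hd : 0 < d)
    (l l' : ι) (k k' : ℕ) (hk : 0 < k) (hk' : 0 < k')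
    (h : k • toricWeight N g d c (.inr l) = k' • toricWeight N g d c (.inr l')) : l = l' := by
  have ne_self_of_ne {l : ι} (hl : l ≠ N) {k k' : ℕ} (hk' : 0 < k') :
      k' • toricWeight N g d c (.inr N) ≠ k • toricWeight N g d c (.inr l) := fun h => by
    have hzero := apply_inr_eq_zero_of_weight_eq hι hg hl ((Finsupp.weight_single _ _ _).trans h)
    exact hk'.ne' (by simpa using hzero)
  by_contra hll'
  obtain rfl | hl := eq_or_ne l N
  · exact ne_self_of_ne (Ne.symm hll') hk h
  obtain rfl | hl' := eq_or_ne l' N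
  · exact ne_self_of_ne hl hk' h.symm
  have hcoord := DFunLike.congr_fun h l
  simp [toricWeight_inr_of_ne hl, toricWeight_inr_of_ne hl', hl, hll', hk.ne', hd.ne'] at hcoord

theorem weight_toricWeight_mixed_eq (hι : 2 ≤ Fintype.card ι)
    (hc : (Fintype.card ι - 2) * d + c = g) :
    weight (toricWeight N g d c) (single (.inr N) 1 + ∑ p ∈ {N}ᶜ, single (.inr p) g) =
      weight (toricWeight N g d c) (∑ p, single (.inl p) 1) := by
  ext q
  obtain rfl | hq := eq_or_ne q N
  · have hrest (p : ι) (hp : p ∈ ({q}ᶜ : Finset ι)) :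
        (single (.inr q) 1 + ∑ p ∈ {q}ᶜ, single (.inr p) g : ι ⊕ ι →₀ ℕ) (.inr p) * d = g * d := by
      have hp : p ≠ q := by simpa using hp
      simp [Finsupp.single_apply, hp]
    rw [weight_toricWeight_apply_self, weight_toricWeight_apply_self, Finset.sum_congr rfl hrest]
    obtain ⟨m, hm⟩ := Nat.exists_eq_add_of_le' hι
    have hmc : m * d + c = g := by simpa [hm] using hc
    suffices g * c + (m + 1) * (g * d) = (g + d) * g by
      simpa [Finsupp.single_apply, Finset.card_compl, hm]
    rw [← hmc]
    ring
  · rw [weight_toricWeight_apply_of_ne _ hq, weight_toricWeight_apply_of_ne _ hq]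
    suffices g ^ 2 + g * d = (g + d) * g by simpa [Finsupp.single_apply, hq]
    ring

theorem not_isUnit_sub_of_weight_eq (hι : 3 ≤ Fintype.card ι) (hg : 0 < g) (hd : 0 < d)
    (hc : (Fintype.card ι - 2) * d + c = g) {k : ℕ} {b : ι ⊕ ι →₀ ℕ}
    (hb : weight (toricWeight N g d c) b = k • toricWeight N g d c (.inr N)) :
    ¬ IsUnit ((k : ℤ) - b (.inr N)) := by
  have hne (p : ι) (hp : p ≠ N) :
      b (.inl p) * ((g + d) * g) + (b (.inr N) * g ^ 2 + b (.inr p) * d) = k * g ^ 2 := by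
    rw [← weight_toricWeight_apply_of_ne b hp, hb, Finsupp.smul_apply,
      toricWeight_inr_self_apply_of_ne hp, smul_eq_mul]
  have hself : b (.inl N) * ((g + d) * g) + (b (.inr N) * (g * c) + ∑ p ∈ {N}ᶜ, b (.inr p) * d) =
      k * (g * c) := by
    rw [← weight_toricWeight_apply_self b, hb, Finsupp.smul_apply,
      toricWeight_inr_self_apply_self, smul_eq_mul]
  rw [Int.isUnit_iff]
  rintro (h | h)
  · obtain rfl : k = b (.inr N) + 1 := by omega
    have hy (p : ι) (hp : p ∈ ({N}ᶜ : Finset ι)) : b (.inr p) * d = g ^ 2 := by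
      have hp := hne p (by simpa using hp)
      have hx : b (.inl p) = 0 := by
        by_contra hx
        nlinarith [Nat.pos_of_ne_zero hx, mul_pos hg hd]
      rw [hx] at hp
      linarith
    rw [Finset.sum_congr rfl hy] at hself
    have hgg : 0 < g ^ 2 := by positivity
    have hgc : g * c ≤ g ^ 2 := by
      rw [sq]
      exact Nat.mul_le_mul_left g (by omega)
    have hcard : 2 * g ^ 2 ≤ (Fintype.card ι - 1) * g ^ 2 := Nat.mul_le_mul_right _ (by omega)
    simp only [Finset.sum_const, Finset.card_compl, Finset.card_singleton, smul_eq_mul,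
      add_one_mul] at hself
    omega
  · obtain ⟨p, hp⟩ := Fintype.exists_ne_of_one_lt_card (by omega) N
    have hk : b (.inr N) = k + 1 := by omega
    have hp := hne p hp
    rw [hk, add_one_mul] at hp
    have hgg : 0 < g ^ 2 := by positivity
    omega

theorem card_lt_card_of_pairCon_eq_ker {κ : Type*} [Fintype κ] {A B : κ → ι ⊕ ι →₀ ℕ}
    (hι : 3 ≤ Fintype.card ι) (hg : 0 < g) (hd : 0 < d) (hc : (Fintype.card ι - 2) * d + c = g)
    (h : pairCon A B = AddCon.ker (weight (R := ℕ) (toricWeight N g d c))) :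
    Fintype.card ι < Fintype.card κ := by
  by_contra! hκ
  have := nonTorsionWeight_toricWeight (N := N) (c := c) (by omega) hg hd
  obtain ⟨j, hj, k, u, hju⟩ := exists_injective_pair_eq_single h Sum.inr
    (exists_weight_single_inr_eq hg) (eq_of_smul_toricWeight_inr_eq hι hg hd)
  have hsurj : j.Surjective := (hj.bijective_of_nat_card_le (by simpa using hκ)).surjective
  have hu (l : ι) : weight (toricWeight N g d c) (u l) = k l • toricWeight N g d c (.inr l) := by
    rw [← weight_eq_of_pair_eq h (hju l), Finsupp.weight_single]
  let t : ℤ := k N - u N (.inr N)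
  let f : (ι ⊕ ι →₀ ℕ) →+ ℤ := (Nat.castAddMonoidHom ℤ).comp (Finsupp.applyAddHom (.inr N))
  have hf (i : κ) : f (A i) - f (B i) ∈ AddSubgroup.zmultiples t := by
    obtain ⟨l, rfl⟩ := hsurj i
    have hsub : f (single (.inr l) (k l)) - f (u l) ∈ AddSubgroup.zmultiples t := by
      obtain rfl | hl := eq_or_ne l N
      · simp [f, t]
      · simp [f, hl, apply_inr_eq_zero_of_weight_eq hι hg hl (hu l)]
    obtain ⟨hA, hB⟩ | ⟨hA, hB⟩ := Sym2.eq_iff.1 (hju l)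
    · rwa [hA, hB]
    · rw [hA, hB, ← neg_sub]
      exact neg_mem hsub
  have hmixed := sub_mem_of_pairCon f _ hf
    (h ▸ AddCon.ker_apply.2 (weight_toricWeight_mixed_eq (by omega) hc) : pairCon A B _ _)
  have hone : f (single (.inr N) 1 + ∑ p ∈ {N}ᶜ, single (.inr p) g) -
      f (∑ p, single (.inl p) 1) = 1 := by
    simp [f, Finsupp.single_apply]
  rw [hone, Int.mem_zmultiples_iff] at hmixed
  exact not_isUnit_sub_of_weight_eq hι hg hd hc (hu N) (isUnit_of_dvd_one hmixed)

end Simplicial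

theorem map_X_eq_monomial_toricWeight {ι R : Type*} [Fintype ι] [DecidableEq ι] [CommSemiring R]
    {N : ι} {g d c : ℕ} {φ : MvPolynomial (ι ⊕ ι) R →ₐ[R] MvPolynomial ι R}
    (hφx : ∀ i, φ (X (.inl i)) = X i ^ ((g + d) * g))
    (hφy : ∀ i ≠ N, φ (X (.inr i)) = X i ^ d * X N ^ d)
    (hφN : φ (X (.inr N)) = (∏ i ∈ {N}ᶜ, X i ^ g ^ 2) * X N ^ (g * c)) (s : ι ⊕ ι) :
    φ (X s) = monomial (toricWeight N g d c s) 1 := by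
  obtain i | l := s
  · rw [hφx, X_pow_eq_monomial, toricWeight]
  obtain rfl | hl := eq_or_ne l N
  · simp_rw [hφN, toricWeight_inr_self, X_pow_eq_monomial, ← monomial_sum_one,
      monomial_mul, one_mul]
  · simp_rw [hφy l hl, toricWeight_inr_of_ne hl, X_pow_eq_monomial, monomial_mul, one_mul]

theorem stmt9_general {ι κ R : Type*} [Fintype ι] [DecidableEq ι] [Fintype κ] [CommRing R]
    [Nontrivial R] (N : ι) (hι : 3 ≤ Fintype.card ι) {f g : ℕ} (hg : 0 < g) (hgf : g < f)
    (hfg : (Fintype.card ι - 2) * f ≤ (Fintype.card ι - 1) * g)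
    (φ : MvPolynomial (ι ⊕ ι) R →ₐ[R] MvPolynomial ι R)
    (hφx : ∀ i, φ (X (.inl i)) = X i ^ (f * g))
    (hφy : ∀ i ≠ N, φ (X (.inr i)) = X i ^ (f - g) * X N ^ (f - g))
    (hφN : φ (X (.inr N)) = (∏ i ∈ {N}ᶜ, X i ^ g ^ 2) *
      X N ^ (g * ((Fintype.card ι - 1) * g - (Fintype.card ι - 2) * f)))
    (B : κ → MvPolynomial (ι ⊕ ι) R) (hB : ∀ i, IsBinomial (B i))
    (hspan : Ideal.span (Set.range B) = RingHom.ker φ) :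
    Fintype.card ι < Fintype.card κ := by
  obtain ⟨d, rfl⟩ := Nat.exists_eq_add_of_le hgf.le
  choose a b _ hab using hB
  obtain rfl : B = fun i => monomial (a i) 1 - monomial (b i) 1 := funext hab
  rw [Nat.add_sub_cancel_left] at hφy
  have hc : (Fintype.card ι - 2) * d +
      ((Fintype.card ι - 1) * g - (Fintype.card ι - 2) * (g + d)) = g := by
    have hsucc : (Fintype.card ι - 1) * g = (Fintype.card ι - 2) * g + g := by
      rw [← add_one_mul]
      congr 1
      omega
    rw [hsucc, mul_add] at hfg ⊢
    omega
  exact card_lt_card_of_pairCon_eq_ker hι hg (by omega) hc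
    (pairCon_eq_ker_weight (map_X_eq_monomial_toricWeight hφx hφy hφN) hspan)

theorem exists_castLE_eq_iff_ne_last {n : ℕ} (h : n - 1 ≤ n) (h' : n - 1 < n) {l : Fin n} :
    (∃ i : Fin (n - 1), Fin.castLE h i = l) ↔ l ≠ ⟨n - 1, h'⟩ := by
  refine ⟨?_, fun hl => ⟨⟨l, by have := Fin.val_ne_iff.2 hl; grind⟩, rfl⟩⟩
  rintro ⟨i, rfl⟩ hi
  exact i.2.ne (congrArg Fin.val hi)

theorem prod_compl_last {n : ℕ} (h : n - 1 ≤ n) (h' : n - 1 < n) {M : Type*} [CommMonoid M]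
    (F : Fin n → M) : ∏ l ∈ {⟨n - 1, h'⟩}ᶜ, F l = ∏ i : Fin (n - 1), F (Fin.castLE h i) := by
  have hmap : ({⟨n - 1, h'⟩}ᶜ : Finset (Fin n)) = Finset.univ.map (Fin.castLEEmb h) := by
    ext l
    simp [← exists_castLE_eq_iff_ne_last h h']
  rw [hmap, Finset.prod_map]
  rfl

/-- In the setting of the paper (`n ≥ 3`, coprime `f > g > 0`,
`(n-1)f ≤ ng`, `K` a field of characteristic zero), the toric ideal `ker φ` is not
generated by `n` binomials; in particular the associated simplicial toric variety of
codimension `n` is not a complete intersection. -/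
theorem stmt9 (n : ℕ) (hn : 3 ≤ n) (f g : ℕ) (hco : Nat.Coprime f g)
    (hg : 0 < g) (hgf : g < f) (hng : (n - 1) * f ≤ n * g)
    (K : Type*) [Field K] [CharZero K]
    (φ : MvPolynomial (Fin n ⊕ Fin n) K →ₐ[K] MvPolynomial (Fin n) K)
    (hφx : ∀ i : Fin n, φ (X (Sum.inl i)) = X i ^ (f * g))
    (hφy : ∀ i : Fin (n - 1), φ (X (Sum.inr (Fin.castLE (by omega) i))) =
      X (Fin.castLE (by omega) i : Fin n) ^ (f - g) * X (⟨n - 1, by omega⟩ : Fin n) ^ (f - g))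
    (hφyn : φ (X (Sum.inr (⟨n - 1, by omega⟩ : Fin n))) =
      (∏ i : Fin (n - 1), X (Fin.castLE (by omega) i : Fin n) ^ g ^ 2) *
        X (⟨n - 1, by omega⟩ : Fin n) ^ (g * ((n - 1) * g - (n - 2) * f))) :
    ¬ ∃ B : Fin n → MvPolynomial (Fin n ⊕ Fin n) K,
      (∀ i, IsBinomial (B i)) ∧ Ideal.span (Set.range B) = RingHom.ker φ := by
  rintro ⟨B, hB, hspan⟩
  have hfg : (n - 2) * f ≤ (n - 1) * g :=
    calc (n - 2) * f = (n - 1) * f - f := by rw [← Nat.sub_one_mul, Nat.sub_sub]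
      _ ≤ n * g - g := by omega
      _ = (n - 1) * g := (Nat.sub_one_mul n g).symm
  refine (stmt9_general ⟨n - 1, by omega⟩ (by simpa) hg hgf (by simpa) φ hφx (fun l hl => ?_) ?_
    B hB hspan).false
  · obtain ⟨i, rfl⟩ := (exists_castLE_eq_iff_ne_last (Nat.sub_le n 1) (by omega)).2 hl
    exact hφy i
  · rw [hφyn, prod_compl_last (Nat.sub_le n 1), Fintype.card_fin]
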